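/- For every c > 0 there exists a constant C, depending only on c, such that for every a > 0, all x, y ∈ (0,a) and every t ≥ a²: ∫_0^t ∫_0^a p^a_s(x,z)·e^{−cz}·p^a_{t−s}(z,y) dz ds ≤ C·( t/a³ + min(1,1/x) + min(1,1/y) )·p^a_t(x,y). -/

import Mathlib

open Real MeasureTheory Set Filter

/-- Transition density of Brownian motion killed upon exiting `(0,a)`. -/
noncomputable def pker (a t x y : ℝ) : ℝ :=
  (2/a) * ∑' n : ℕ, Real.exp (-(π^2) * ((n : ℝ) + 1)^2 * t / (2 * a^2)) *
    Real.sin (π * ((n : ℝ) + 1) * x / a) * Real.sin (π * ((n : ℝ) + 1) * y / a)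

/-!
The spectral series of the killed heat kernel hides its positivity. That is recovered from simple
random walk killed at the ends of `{0, …, N}`: its `m`-step kernel has an analogous trigonometric
form and is nonnegative by induction on `m`; averaging over a Poisson number of steps with mean
proportional to `N²` and letting `N → ∞` gives `pker` up to scaling.

Let `κ` and `u` be the principal Dirichlet eigenvalue and eigenfunction. From time `a² / 2` on,
`pker` is comparable with its first term, so for `s ≤ t / 2` and `t ≥ a²` the second factor
`p_{t-s}(z, y)` is at most `3 e^{κs} (u(z) / u(x)) p_t(x, y)`. Multiply by `p_s(x, z)` and integrate
over `s ≤ t / 2`. With `G` the Green function, the times `s ≤ a² / 2` contribute at most a multiple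
of `G(x, z) u(z) / u(x)`, which is `O(z min(1, z / x))`; the later times contribute at most a
multiple of `(t / a) u(z)²`, which is `O(t z² / a³)`. Times `s ≥ t / 2` follow by reversing the
bridge. So the occupation density at `z` is at most a multiple of
`(z + z²) (t / a³ + min(1, 1 / x) + min(1, 1 / y)) p_t(x, y)`, and any weight in `L¹((z + z²) dz)`
may be integrated against it.
-/

open scoped Nat Topology

theorem two_mul_sin_half_mul_sum_cos (θ : ℝ) (N : ℕ) :
    2 * sin (θ / 2) * ∑ n ∈ Finset.range N, cos (n * θ) = sin (N * θ - θ / 2) + sin (θ / 2) := by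
  induction N with
  | zero => simp
  | succ N ih =>
    have hsplit : ((N + 1 : ℕ) : ℝ) * θ - θ / 2 = N * θ + θ / 2 := by push_cast; ring
    rw [Finset.sum_range_succ, mul_add, ih, hsplit, sin_add, sin_sub]
    ring

theorem sum_cos_int_mul_pi_div {N : ℕ} (hN : 0 < N) {m : ℤ} (hm : ¬ 2 * (N : ℤ) ∣ m) :
    ∑ n ∈ Finset.range N, cos (n * (m * π / N)) = (1 - (-1) ^ m) / 2 := by
  have hsin : sin (m * π / N / 2) ≠ 0 := by
    rw [Ne, sin_eq_zero_iff]
    rintro ⟨k, hk⟩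
    refine hm ⟨k, ?_⟩
    field_simp at hk
    exact_mod_cast (by linarith : (m : ℝ) = 2 * N * k)
  have hsum := two_mul_sin_half_mul_sum_cos (m * π / N) N
  rw [mul_div_cancel₀ (m * π) (by positivity : (N : ℝ) ≠ 0), sin_int_mul_pi_sub] at hsum
  apply mul_left_cancel₀ (mul_ne_zero two_ne_zero hsin)
  linear_combination hsum

theorem abs_sin_natCast_mul_le (n : ℕ) (θ : ℝ) : |sin (n * θ)| ≤ n * |sin θ| := by
  induction n with
  | zero => simp
  | succ n ih =>
    have hcos (x y : ℝ) : |sin x * cos y| ≤ |sin x| := by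
      rw [abs_mul]
      exact mul_le_of_le_one_right (abs_nonneg _) (abs_cos_le_one y)
    calc |sin ((n + 1 : ℕ) * θ)| = |sin (n * θ) * cos θ + sin θ * cos (n * θ)| := by
          rw [Nat.cast_add_one, add_one_mul, sin_add, mul_comm (cos _)]
      _ ≤ |sin (n * θ)| + |sin θ| := (abs_add_le _ _).trans (add_le_add (hcos _ _) (hcos _ _))
      _ ≤ (n + 1 : ℕ) * |sin θ| := by push_cast; linarith

theorem abs_exp_mul_sin_mul_sin_le (u v w : ℝ) : |exp u * sin v * sin w| ≤ exp u := by
  rw [mul_assoc, abs_mul, abs_exp, abs_mul]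
  exact mul_le_of_le_one_right (exp_pos u).le
    (mul_le_one₀ (abs_sin_le_one v) (abs_nonneg _) (abs_sin_le_one w))

theorem summable_exp_neg_mul_natCast_sq {c : ℝ} (hc : 0 < c) :
    Summable fun n : ℕ => exp (-c * (n : ℝ) ^ 2) := by
  refine .of_nonneg_of_le (fun n => (exp_pos _).le) (fun n => exp_le_exp.2 ?_)
    (summable_exp_nat_mul_iff.2 (neg_lt_zero.2 hc))
  have hn : (n : ℝ) ≤ (n : ℝ) ^ 2 := by exact_mod_cast Nat.le_self_pow two_ne_zero n
  nlinarith

/-- `N / 2` times the `m`-step transition probability from `i` to `j` of the simple random walk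
on `{1, …, N - 1}` killed at `0` and `N`, in its spectral representation. -/
noncomputable def walkKernel (N m i j : ℕ) : ℝ :=
  ∑ n ∈ Finset.range N, cos (n * π / N) ^ m * sin (n * (i * π / N)) * sin (n * (j * π / N))

theorem walkKernel_zero_of_ne {N i j : ℕ} (hi : i ≤ N) (hj : j ≤ N) (hij : i ≠ j) :
    walkKernel N 0 i j = 0 := by
  have hN : 0 < N := by lia
  have hsub := sum_cos_int_mul_pi_div hN (m := i - j) fun h => by
    have := Int.eq_zero_of_abs_lt_dvd h (by rw [abs_lt]; lia)
    lia
  have hadd := sum_cos_int_mul_pi_div hN (m := i + j) fun h => by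
    have := Int.eq_zero_of_abs_lt_dvd h (by rw [abs_lt]; lia)
    lia
  have hparity : (-1 : ℝ) ^ ((i : ℤ) - j) = (-1) ^ ((i : ℤ) + j) := by
    rw [show (i : ℤ) + j = i - j + 2 * j by ring, zpow_add₀ (by norm_num), zpow_mul]
    norm_num
  have hproduct (n : ℕ) : cos (n * π / N) ^ 0 * sin (n * (i * π / N)) * sin (n * (j * π / N)) =
      (cos (n * (((i - j : ℤ) : ℝ) * π / N)) - cos (n * (((i + j : ℤ) : ℝ) * π / N))) / 2 := by
    have := two_mul_sin_mul_sin (n * (i * π / N)) (n * (j * π / N))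
    rw [← mul_sub, ← mul_add, ← sub_div, ← add_div, ← sub_mul, ← add_mul] at this
    push_cast
    linear_combination this / 2
  simp only [walkKernel, hproduct]
  rw [← Finset.sum_div, Finset.sum_sub_distrib, hsub, hadd, hparity]
  simp

theorem walkKernel_zero_nonneg {N i j : ℕ} (hi : i ≤ N) (hj : j ≤ N) : 0 ≤ walkKernel N 0 i j := by
  rcases eq_or_ne i j with rfl | hij
  · exact Finset.sum_nonneg fun n _ => by rw [pow_zero, one_mul]; exact mul_self_nonneg _
  · exact (walkKernel_zero_of_ne hi hj hij).ge

theorem walkKernel_zero_left (N m j : ℕ) : walkKernel N m 0 j = 0 := by simp [walkKernel]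

theorem walkKernel_self_left (N m j : ℕ) : walkKernel N m N j = 0 := by
  rcases N.eq_zero_or_pos with rfl | hN
  · simp [walkKernel]
  · simp [walkKernel, mul_div_cancel_left₀ π (by positivity : (N : ℝ) ≠ 0), sin_nat_mul_pi]

theorem walkKernel_succ (N m i j : ℕ) :
    walkKernel N (m + 1) (i + 1) j = (walkKernel N m (i + 2) j + walkKernel N m i j) / 2 := by
  unfold walkKernel
  rw [← Finset.sum_add_distrib, Finset.sum_div]
  refine Finset.sum_congr rfl fun n _ => ?_
  have hright : (n : ℝ) * ((i + 2 : ℕ) * π / N) = n * ((i + 1 : ℕ) * π / N) + n * π / N := by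
    push_cast; ring
  have hleft : (n : ℝ) * (i * π / N) = n * ((i + 1 : ℕ) * π / N) - n * π / N := by
    push_cast; ring
  rw [hright, hleft, sin_add, sin_sub]
  ring

theorem walkKernel_nonneg {N i j : ℕ} (m : ℕ) (hi : i ≤ N) (hj : j ≤ N) :
    0 ≤ walkKernel N m i j := by
  induction m generalizing i with
  | zero => exact walkKernel_zero_nonneg hi hj
  | succ m ih =>
    rcases hi.eq_or_lt with rfl | hlt
    · exact (walkKernel_self_left i _ j).ge
    rcases i with _ | i
    · exact (walkKernel_zero_left N _ j).ge
    · rw [walkKernel_succ]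
      exact div_nonneg (add_nonneg (ih (by lia)) (ih (by lia))) zero_le_two

/-- `walkKernel` averaged over a Poisson number of steps of mean `r`: the killed walk run in
continuous time. -/
noncomputable def poissonWalkKernel (N : ℕ) (r : ℝ) (i j : ℕ) : ℝ :=
  ∑ n ∈ Finset.range N,
    exp (r * (cos (n * π / N) - 1)) * sin (n * (i * π / N)) * sin (n * (j * π / N))

theorem hasSum_poissonWalkKernel (N : ℕ) (r : ℝ) (i j : ℕ) :
    HasSum (fun m : ℕ => exp (-r) * (r ^ m / m ! * walkKernel N m i j))
      (poissonWalkKernel N r i j) := by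
  have hexp (x : ℝ) : HasSum (fun m : ℕ => (r * x) ^ m / m !) (exp (r * x)) := by
    rw [exp_eq_exp_ℝ]
    exact NormedSpace.expSeries_div_hasSum_exp _
  convert! (hasSum_sum fun n (_ : n ∈ Finset.range N) => (((hexp (cos (n * π / N))).mul_right
    (sin (n * (i * π / N)))).mul_right (sin (n * (j * π / N))))).mul_left (exp (-r)) using 1
  · ext m
    simp only [walkKernel, Finset.mul_sum]
    exact Finset.sum_congr rfl fun n _ => by ring
  · simp only [poissonWalkKernel, Finset.mul_sum]
    refine Finset.sum_congr rfl fun n _ => ?_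
    rw [mul_sub_one, sub_eq_neg_add, exp_add]
    ring

theorem poissonWalkKernel_nonneg {N i j : ℕ} {r : ℝ} (hr : 0 ≤ r) (hi : i ≤ N) (hj : j ≤ N) :
    0 ≤ poissonWalkKernel N r i j :=
  (hasSum_poissonWalkKernel N r i j).nonneg fun m => by
    have := walkKernel_nonneg m hi hj
    positivity

theorem tendsto_mul_sq_mul_cos_sub_one (τ : ℝ) (n : ℕ) :
    Tendsto (fun N : ℕ => 2 * τ * (N : ℝ) ^ 2 / π ^ 2 * (cos (n * π / N) - 1)) atTop
      (𝓝 (-τ * (n : ℝ) ^ 2)) := by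
  have hsinc : Tendsto (fun N : ℕ => -τ * (n : ℝ) ^ 2 * sinc (n * π / 2 / N) ^ 2) atTop
      (𝓝 (-τ * (n : ℝ) ^ 2)) := by
    have h := (continuous_sinc.tendsto 0).comp
      (tendsto_const_div_atTop_nhds_zero_nat ((n : ℝ) * π / 2))
    simpa only [Function.comp_apply, sinc_zero, one_pow, mul_one] using
      (h.pow 2).const_mul (-τ * (n : ℝ) ^ 2)
  refine hsinc.congr' ?_
  filter_upwards [eventually_gt_atTop 0] with N hN
  rcases n.eq_zero_or_pos with rfl | hn
  · simp
  · rw [sinc_of_ne_zero (by positivity), show (n : ℝ) * π / N = 2 * (n * π / 2 / N) by ring,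
      cos_two_mul, cos_sq']
    field_simp
    ring

theorem mul_sq_mul_cos_sub_one_le {τ : ℝ} (hτ : 0 ≤ τ) {n N : ℕ} (hn : n < N) :
    2 * τ * (N : ℝ) ^ 2 / π ^ 2 * (cos (n * π / N) - 1) ≤ -(4 * τ / π ^ 2) * (n : ℝ) ^ 2 := by
  have hN : (0 : ℝ) < N := by exact_mod_cast n.zero_le.trans_lt hn
  have hangle : |n * π / N| ≤ π := by
    rw [abs_of_nonneg (by positivity), div_le_iff₀ hN, mul_comm]
    gcongr
  calc 2 * τ * (N : ℝ) ^ 2 / π ^ 2 * (cos (n * π / N) - 1)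
      ≤ 2 * τ * (N : ℝ) ^ 2 / π ^ 2 * -(2 / π ^ 2 * (n * π / N) ^ 2) := by
        gcongr
        linarith [cos_le_one_sub_mul_cos_sq hangle]
    _ = -(4 * τ / π ^ 2) * (n : ℝ) ^ 2 := by
        field_simp
        ring

theorem tendsto_sin_mul_floor {α : ℝ} (hα : 0 ≤ α) (n : ℕ) :
    Tendsto (fun N : ℕ => sin (n * (⌊α / π * N⌋₊ * π / N))) atTop (𝓝 (sin (n * α))) := by
  refine (continuous_sin.tendsto _).comp (Tendsto.const_mul _ ?_)
  have h := ((tendsto_nat_floor_mul_div_atTop (div_nonneg hα pi_pos.le)).comp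
    tendsto_natCast_atTop_atTop).mul_const π
  rw [div_mul_cancel₀ _ pi_ne_zero] at h
  exact h.congr fun N => div_mul_eq_mul_div _ _ _

theorem floor_div_pi_mul_le {α : ℝ} (hα : α ≤ π) (N : ℕ) : ⌊α / π * N⌋₊ ≤ N :=
  Nat.floor_le_of_le (mul_le_of_le_one_left N.cast_nonneg ((div_le_one pi_pos).2 hα))

/-- The heat kernel of `∂ₜ = ∂²` on `(0, π)` with Dirichlet boundary conditions, multiplied
by `π / 2`. -/
noncomputable def sineHeatKernel (τ α β : ℝ) : ℝ :=
  ∑' n : ℕ, exp (-τ * ((n : ℝ) + 1) ^ 2) * sin ((n + 1) * α) * sin ((n + 1) * β)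

theorem sineHeatKernel_comm (τ α β : ℝ) : sineHeatKernel τ α β = sineHeatKernel τ β α :=
  tsum_congr fun _ => mul_right_comm _ _ _

theorem sineHeatKernel_eq_tsum {τ : ℝ} (hτ : 0 < τ) (α β : ℝ) :
    sineHeatKernel τ α β = ∑' n : ℕ, exp (-τ * (n : ℝ) ^ 2) * sin (n * α) * sin (n * β) := by
  rw [Summable.tsum_eq_zero_add]
  · simp [sineHeatKernel]
  · exact .of_norm_bounded (summable_exp_neg_mul_natCast_sq hτ)
      fun n => abs_exp_mul_sin_mul_sin_le _ _ _

theorem tendsto_poissonWalkKernel {τ α β : ℝ} (hτ : 0 < τ) (hα : 0 ≤ α) (hβ : 0 ≤ β) :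
    Tendsto (fun N : ℕ =>
        poissonWalkKernel N (2 * τ * (N : ℝ) ^ 2 / π ^ 2) ⌊α / π * N⌋₊ ⌊β / π * N⌋₊)
      atTop (𝓝 (sineHeatKernel τ α β)) := by
  rw [sineHeatKernel_eq_tsum hτ]
  simp_rw [poissonWalkKernel, fun N f => sum_eq_tsum_indicator (α := ℝ) f (Finset.range N)]
  refine tendsto_tsum_of_dominated_convergence
    (summable_exp_neg_mul_natCast_sq (c := 4 * τ / π ^ 2) (by positivity)) (fun n => ?_)
    (.of_forall fun N n => ?_)
  · refine ((((continuous_exp.tendsto _).comp (tendsto_mul_sq_mul_cos_sub_one τ n)).mul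
      (tendsto_sin_mul_floor hα n)).mul (tendsto_sin_mul_floor hβ n)).congr' ?_
    filter_upwards [eventually_gt_atTop n] with N hN
    rw [indicator_of_mem (Finset.mem_coe.2 (Finset.mem_range.2 hN))]
    rfl
  · by_cases hn : n < N
    · rw [indicator_of_mem (Finset.mem_coe.2 (Finset.mem_range.2 hn))]
      exact (abs_exp_mul_sin_mul_sin_le _ _ _).trans
        (exp_le_exp.2 (mul_sq_mul_cos_sub_one_le hτ.le hn))
    · rw [indicator_of_notMem (by simpa using hn), norm_zero]
      positivity

theorem sineHeatKernel_nonneg {τ α β : ℝ} (hτ : 0 < τ) (hα : α ∈ Icc 0 π) (hβ : β ∈ Icc 0 π) :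
    0 ≤ sineHeatKernel τ α β :=
  ge_of_tendsto' (tendsto_poissonWalkKernel hτ hα.1 hβ.1) fun N =>
    poissonWalkKernel_nonneg (by positivity) (floor_div_pi_mul_le hα.2 N)
      (floor_div_pi_mul_le hβ.2 N)

theorem add_one_sq_le_four_pow (n : ℕ) : ((n : ℝ) + 1) ^ 2 ≤ 4 ^ n := by
  have h : (n : ℝ) + 1 ≤ 2 ^ n := by exact_mod_cast n.lt_two_pow_self
  calc ((n : ℝ) + 1) ^ 2 ≤ ((2 : ℝ) ^ n) ^ 2 := by gcongr
    _ = 4 ^ n := by rw [pow_right_comm]; norm_num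

theorem exp_neg_mul_add_one_sq_le {τ : ℝ} (hτ : 2 ≤ τ) (n : ℕ) :
    exp (-τ * ((n : ℝ) + 1) ^ 2) ≤ exp (-τ) * (1 / 12) ^ n := by
  have htwelve : (12 : ℝ) ≤ exp 6 := by
    rw [show (6 : ℝ) = 3 + 3 by norm_num, exp_add]
    nlinarith [add_one_le_exp (3 : ℝ)]
  have hexponent : -τ * ((n : ℝ) + 1) ^ 2 ≤ -τ + n * -6 := by
    have hn : (n : ℝ) ≤ (n : ℝ) ^ 2 := by exact_mod_cast Nat.le_self_pow two_ne_zero n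
    nlinarith [mul_nonneg (sub_nonneg.2 hτ) (n.cast_nonneg : (0 : ℝ) ≤ n)]
  calc exp (-τ * ((n : ℝ) + 1) ^ 2) ≤ exp (-τ + n * -6) := exp_le_exp.2 hexponent
    _ = exp (-τ) * (1 / exp 6) ^ n := by rw [exp_add, exp_nat_mul, exp_neg 6, one_div]
    _ ≤ exp (-τ) * (1 / 12) ^ n := by gcongr

theorem abs_sineHeatKernel_term_le {τ : ℝ} (hτ : 2 ≤ τ) (α β : ℝ) (n : ℕ) :
    |exp (-τ * ((n : ℝ) + 1) ^ 2) * sin ((n + 1) * α) * sin ((n + 1) * β)| ≤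
      exp (-τ) * |sin α| * |sin β| * (1 / 3) ^ n := by
  have hα := abs_sin_natCast_mul_le (n + 1) α
  have hβ := abs_sin_natCast_mul_le (n + 1) β
  push_cast at hα hβ
  rw [abs_mul, abs_mul, abs_exp]
  calc exp (-τ * ((n : ℝ) + 1) ^ 2) * |sin ((n + 1) * α)| * |sin ((n + 1) * β)|
      ≤ exp (-τ) * (1 / 12) ^ n * ((n + 1) * |sin α|) * ((n + 1) * |sin β|) := by
        gcongr
        exact exp_neg_mul_add_one_sq_le hτ n
    _ = exp (-τ) * |sin α| * |sin β| * ((1 / 12) ^ n * ((n : ℝ) + 1) ^ 2) := by ring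
    _ ≤ exp (-τ) * |sin α| * |sin β| * ((1 / 12) ^ n * 4 ^ n) := by
        gcongr
        exact add_one_sq_le_four_pow n
    _ = exp (-τ) * |sin α| * |sin β| * (1 / 3) ^ n := by rw [← mul_pow]; norm_num

theorem abs_sineHeatKernel_sub_le {τ : ℝ} (hτ : 2 ≤ τ) (α β : ℝ) :
    |sineHeatKernel τ α β - exp (-τ) * sin α * sin β| ≤ exp (-τ) * |sin α| * |sin β| / 2 := by
  have hterm := abs_sineHeatKernel_term_le hτ α β
  have hgeom : HasSum (fun n : ℕ => exp (-τ) * |sin α| * |sin β| * (1 / 3 : ℝ) ^ n)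
      (exp (-τ) * |sin α| * |sin β| * (1 - 1 / 3)⁻¹) :=
    (hasSum_geometric_of_lt_one (by norm_num) (by norm_num)).mul_left _
  have htail : HasSum (fun n : ℕ => exp (-τ) * |sin α| * |sin β| * (1 / 3 : ℝ) ^ (n + 1))
      (exp (-τ) * |sin α| * |sin β| / 2) := by
    convert! hgeom.mul_right (1 / 3) using 1
    · ext n; ring
    · norm_num; ring
  rw [sineHeatKernel, (Summable.of_norm_bounded hgeom.summable hterm).tsum_eq_zero_add]
  simpa using tsum_of_norm_bounded htail fun n => (norm_eq_abs _).trans_le (hterm (n + 1))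

theorem sineHeatKernel_le {τ α β : ℝ} (hτ : 2 ≤ τ) (hα : α ∈ Icc 0 π) (hβ : β ∈ Icc 0 π) :
    sineHeatKernel τ α β ≤ 3 / 2 * (exp (-τ) * sin α * sin β) := by
  have h := (abs_le.1 (abs_sineHeatKernel_sub_le hτ α β)).2
  rw [abs_of_nonneg (sin_nonneg_of_mem_Icc hα), abs_of_nonneg (sin_nonneg_of_mem_Icc hβ)] at h
  linarith

theorem le_sineHeatKernel {τ α β : ℝ} (hτ : 2 ≤ τ) (hα : α ∈ Icc 0 π) (hβ : β ∈ Icc 0 π) :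
    1 / 2 * (exp (-τ) * sin α * sin β) ≤ sineHeatKernel τ α β := by
  have h := (abs_le.1 (abs_sineHeatKernel_sub_le hτ α β)).1
  rw [abs_of_nonneg (sin_nonneg_of_mem_Icc hα), abs_of_nonneg (sin_nonneg_of_mem_Icc hβ)] at h
  linarith

theorem summable_one_div_add_one_sq : Summable fun n : ℕ => 1 / ((n : ℝ) + 1) ^ 2 := by
  simpa using (summable_nat_add_iff 1).2 (summable_one_div_nat_pow.2 one_lt_two)

theorem hasSum_one_div_sq_mul_sin_mul_sin {α β : ℝ} (hβ : 0 ≤ β) (hβα : β ≤ α) (hα : α ≤ π) :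
    HasSum (fun n : ℕ => 1 / ((n : ℝ) + 1) ^ 2 * (sin ((n + 1) * α) * sin ((n + 1) * β)))
      (β * (π - α) / 2) := by
  have hcos {θ : ℝ} (hθ : 0 ≤ θ) (hθ' : θ ≤ 2 * π) :=
    hasSum_one_div_nat_pow_mul_cos one_ne_zero (x := θ / (2 * π))
      ⟨by positivity, (div_le_one two_pi_pos).2 hθ'⟩
  have hdiff := ((hcos (θ := α - β) (by linarith) (by linarith)).sub
    (hcos (θ := α + β) (by linarith) (by linarith))).div_const 2
  rw [← hasSum_nat_add_iff' 1] at hdiff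
  convert! hdiff using 1
  · ext n
    have hangle (θ : ℝ) : 2 * π * (n + 1 : ℕ) * (θ / (2 * π)) = (n + 1) * θ := by
      push_cast
      field_simp
    have hproduct := two_mul_sin_mul_sin ((n + 1) * α) ((n + 1) * β)
    rw [← mul_sub, ← mul_add] at hproduct
    rw [hangle, hangle]
    push_cast
    linear_combination 1 / ((n : ℝ) + 1) ^ 2 / 2 * hproduct
  · have hbernoulli (x : ℝ) :
        (Polynomial.map (algebraMap ℚ ℝ) (Polynomial.bernoulli (2 * 1))).eval x =
          x ^ 2 - x + 6⁻¹ := bernoulliFun_two x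
    rw [hbernoulli, hbernoulli]
    simp
    field_simp
    ring

theorem integral_sineHeatKernel_of_le {α β : ℝ} (hβ : 0 ≤ β) (hβα : β ≤ α) (hα : α ≤ π) :
    ∫ τ in Ioi 0, sineHeatKernel τ α β = β * (π - α) / 2 := by
  have hrate (n : ℕ) : -((n : ℝ) + 1) ^ 2 < 0 := neg_lt_zero.2 (by positivity)
  have hterm (n : ℕ) (τ : ℝ) :
      exp (-τ * ((n : ℝ) + 1) ^ 2) * sin ((n + 1) * α) * sin ((n + 1) * β) =
        exp (-((n : ℝ) + 1) ^ 2 * τ) * (sin ((n + 1) * α) * sin ((n + 1) * β)) := by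
    rw [mul_assoc, neg_mul_comm, mul_comm τ]
  have hint (n : ℕ) : IntegrableOn (fun τ => exp (-τ * ((n : ℝ) + 1) ^ 2) *
      sin ((n + 1) * α) * sin ((n + 1) * β)) (Ioi 0) := by
    simp only [hterm]
    exact (integrableOn_exp_mul_Ioi (hrate n) 0).mul_const _
  have hexp (n : ℕ) : ∫ τ in Ioi (0 : ℝ), exp (-((n : ℝ) + 1) ^ 2 * τ) = 1 / ((n : ℝ) + 1) ^ 2 := by
    rw [integral_exp_mul_Ioi (hrate n), mul_zero, exp_zero, neg_div_neg_eq]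
  have hsum : Summable fun n : ℕ => ∫ τ in Ioi (0 : ℝ),
      ‖exp (-τ * ((n : ℝ) + 1) ^ 2) * sin ((n + 1) * α) * sin ((n + 1) * β)‖ := by
    simp only [hterm, norm_mul, norm_of_nonneg (exp_pos _).le, integral_mul_const, hexp]
    refine .of_nonneg_of_le (fun n => by positivity) (fun n => ?_) summable_one_div_add_one_sq
    exact mul_le_of_le_one_right (by positivity)
      (mul_le_one₀ (abs_sin_le_one _) (abs_nonneg _) (abs_sin_le_one _))
  refine (hasSum_integral_of_summable_integral_norm hint hsum).unique ?_
  simp only [hterm, integral_mul_const, hexp]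
  exact hasSum_one_div_sq_mul_sin_mul_sin hβ hβα hα

theorem integral_sineHeatKernel {α β : ℝ} (hα : α ∈ Icc 0 π) (hβ : β ∈ Icc 0 π) :
    ∫ τ in Ioi 0, sineHeatKernel τ α β = min α β * (π - max α β) / 2 := by
  rcases le_total β α with h | h
  · rw [min_eq_right h, max_eq_left h, integral_sineHeatKernel_of_le hβ.1 h hα.2]
  · simp only [sineHeatKernel_comm _ α]
    rw [min_eq_left h, max_eq_right h, integral_sineHeatKernel_of_le hα.1 h hβ.2]

/-- The principal Dirichlet eigenvalue of `-∂² / 2`, the generator of Brownian motion up to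
sign, on `(0, a)`. -/
noncomputable def principalEigenvalue (a : ℝ) : ℝ := π ^ 2 / (2 * a ^ 2)

/-- The eigenfunction of `principalEigenvalue a`, normalised to have maximum `1`. -/
noncomputable def principalEigenfunction (a x : ℝ) : ℝ := sin (π * x / a)

/-- The Green function of `-∂² / 2` on `(0, a)`: the density of the occupation measure of
killed Brownian motion. -/
noncomputable def greenKernel (a x z : ℝ) : ℝ := 2 / a * (min x z * (a - max x z))

theorem principalEigenvalue_pos {a : ℝ} (ha : 0 < a) : 0 < principalEigenvalue a := by
  unfold principalEigenvalue
  positivity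

theorem principalEigenvalue_mul_sq_div_two {a : ℝ} (ha : 0 < a) :
    principalEigenvalue a * (a ^ 2 / 2) = π ^ 2 / 4 := by
  unfold principalEigenvalue
  field_simp
  norm_num

theorem two_le_principalEigenvalue_mul {a s : ℝ} (ha : 0 < a) (hs : a ^ 2 / 2 ≤ s) :
    2 ≤ principalEigenvalue a * s :=
  calc (2 : ℝ) ≤ principalEigenvalue a * (a ^ 2 / 2) := by
        rw [principalEigenvalue_mul_sq_div_two ha]
        nlinarith [pi_gt_three]
    _ ≤ principalEigenvalue a * s :=
        mul_le_mul_of_nonneg_left hs (principalEigenvalue_pos ha).le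

theorem pi_mul_div_mem_Icc {a x : ℝ} (hx : x ∈ Icc 0 a) : π * x / a ∈ Icc 0 π := by
  have ha : 0 ≤ a := hx.1.trans hx.2
  exact ⟨div_nonneg (mul_nonneg pi_pos.le hx.1) ha,
    div_le_of_le_mul₀ ha pi_pos.le (mul_le_mul_of_nonneg_left hx.2 pi_pos.le)⟩

theorem principalEigenfunction_nonneg {a x : ℝ} (hx : x ∈ Icc 0 a) :
    0 ≤ principalEigenfunction a x :=
  sin_nonneg_of_mem_Icc (pi_mul_div_mem_Icc hx)

theorem principalEigenfunction_pos {a x : ℝ} (hx : x ∈ Ioo 0 a) :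
    0 < principalEigenfunction a x := by
  have ha : 0 < a := hx.1.trans hx.2
  refine sin_pos_of_pos_of_lt_pi (div_pos (mul_pos pi_pos hx.1) ha) ?_
  rw [div_lt_iff₀ ha]
  exact mul_lt_mul_of_pos_left hx.2 pi_pos

theorem greenKernel_pos {a x z : ℝ} (hx : x ∈ Ioo 0 a) (hz : z ∈ Ioo 0 a) :
    0 < greenKernel a x z :=
  mul_pos (div_pos two_pos (hx.1.trans hx.2))
    (mul_pos (lt_min hx.1 hz.1) (sub_pos.2 (max_lt hx.2 hz.2)))

theorem pker_eq_sineHeatKernel (a t x y : ℝ) :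
    pker a t x y =
      2 / a * sineHeatKernel (principalEigenvalue a * t) (π * x / a) (π * y / a) := by
  have hexponent (n : ℕ) : -(π ^ 2) * ((n : ℝ) + 1) ^ 2 * t / (2 * a ^ 2) =
      -(principalEigenvalue a * t) * ((n : ℝ) + 1) ^ 2 := by
    unfold principalEigenvalue
    ring
  have hangle (n : ℕ) (u : ℝ) : π * ((n : ℝ) + 1) * u / a = (n + 1) * (π * u / a) := by ring
  simp only [pker, sineHeatKernel, hexponent, hangle]

theorem pker_comm (a t x y : ℝ) : pker a t x y = pker a t y x := by
  rw [pker_eq_sineHeatKernel, pker_eq_sineHeatKernel, sineHeatKernel_comm]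

theorem pker_nonneg {a t x y : ℝ} (ha : 0 < a) (ht : 0 < t) (hx : x ∈ Icc 0 a)
    (hy : y ∈ Icc 0 a) : 0 ≤ pker a t x y := by
  rw [pker_eq_sineHeatKernel]
  exact mul_nonneg (by positivity) (sineHeatKernel_nonneg (mul_pos (principalEigenvalue_pos ha) ht)
    (pi_mul_div_mem_Icc hx) (pi_mul_div_mem_Icc hy))

theorem measurable_pker (a : ℝ) : Measurable fun p : ℝ × ℝ × ℝ => pker a p.1 p.2.1 p.2.2 := by
  unfold pker
  exact (Measurable.tsum fun n => by fun_prop).const_mul _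

theorem pker_le {a t x y : ℝ} (ha : 0 < a) (ht : a ^ 2 / 2 ≤ t) (hx : x ∈ Icc 0 a)
    (hy : y ∈ Icc 0 a) :
    pker a t x y ≤ 3 / a * (exp (-(principalEigenvalue a * t)) * principalEigenfunction a x *
      principalEigenfunction a y) := by
  rw [pker_eq_sineHeatKernel]
  refine (mul_le_mul_of_nonneg_left (sineHeatKernel_le (two_le_principalEigenvalue_mul ha ht)
    (pi_mul_div_mem_Icc hx) (pi_mul_div_mem_Icc hy)) (by positivity)).trans_eq ?_
  unfold principalEigenfunction
  ring

theorem le_pker {a t x y : ℝ} (ha : 0 < a) (ht : a ^ 2 / 2 ≤ t) (hx : x ∈ Icc 0 a)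
    (hy : y ∈ Icc 0 a) :
    1 / a * (exp (-(principalEigenvalue a * t)) * principalEigenfunction a x *
      principalEigenfunction a y) ≤ pker a t x y := by
  rw [pker_eq_sineHeatKernel]
  refine Eq.trans_le ?_ (mul_le_mul_of_nonneg_left (le_sineHeatKernel
    (two_le_principalEigenvalue_mul ha ht) (pi_mul_div_mem_Icc hx) (pi_mul_div_mem_Icc hy))
    (by positivity))
  unfold principalEigenfunction
  ring

theorem integral_pker_Ioi {a x z : ℝ} (ha : 0 < a) (hx : x ∈ Icc 0 a) (hz : z ∈ Icc 0 a) :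
    ∫ s in Ioi 0, pker a s x z = greenKernel a x z := by
  have hmono : Monotone fun u : ℝ => π * u / a := fun u v h => by dsimp only; gcongr
  simp only [pker_eq_sineHeatKernel]
  rw [integral_const_mul,
    integral_comp_mul_left_Ioi (fun τ => sineHeatKernel τ (π * x / a) (π * z / a)) 0
      (principalEigenvalue_pos ha),
    mul_zero, integral_sineHeatKernel (pi_mul_div_mem_Icc hx) (pi_mul_div_mem_Icc hz),
    ← hmono.map_min, ← hmono.map_max, greenKernel, principalEigenvalue, smul_eq_mul]
  field_simp

theorem lintegral_pker_Ioi {a x z : ℝ} (hx : x ∈ Ioo 0 a) (hz : z ∈ Ioo 0 a) :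
    ∫⁻ s in Ioi 0, ENNReal.ofReal (pker a s x z) = ENNReal.ofReal (greenKernel a x z) := by
  have ha : 0 < a := hx.1.trans hx.2
  have hgreen := integral_pker_Ioi ha (Ioo_subset_Icc_self hx) (Ioo_subset_Icc_self hz)
  -- The integral is nonzero, so it is not the junk value of a non-integrable function.
  rw [← hgreen, ofReal_integral_eq_lintegral_ofReal
    (Integrable.of_integral_ne_zero (hgreen.trans_ne (greenKernel_pos hx hz).ne'))]
  filter_upwards [ae_restrict_mem measurableSet_Ioi] with s hs
  exact pker_nonneg ha hs (Ioo_subset_Icc_self hx) (Ioo_subset_Icc_self hz)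

theorem sin_le_two_mul_mul_pi_sub_div_pi {θ : ℝ} (hθ : θ ∈ Icc 0 π) :
    sin θ ≤ 2 * θ * (π - θ) / π := by
  wlog h : θ ≤ π / 2 generalizing θ
  · calc sin θ = sin (π - θ) := (sin_pi_sub θ).symm
      _ ≤ 2 * (π - θ) * (π - (π - θ)) / π :=
        this ⟨sub_nonneg.2 hθ.2, sub_le_self π hθ.1⟩ (by linarith)
      _ = 2 * θ * (π - θ) / π := by ring
  · calc sin θ ≤ θ := sin_le hθ.1
      _ ≤ 2 * θ * (π - θ) / π := by
        rw [le_div_iff₀ pi_pos]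
        nlinarith [hθ.1]

theorem two_mul_mul_pi_sub_div_pi_sq_le_sin {θ : ℝ} (hθ : θ ∈ Icc 0 π) :
    2 * θ * (π - θ) / π ^ 2 ≤ sin θ := by
  wlog h : θ ≤ π / 2 generalizing θ
  · calc 2 * θ * (π - θ) / π ^ 2 = 2 * (π - θ) * (π - (π - θ)) / π ^ 2 := by ring
      _ ≤ sin (π - θ) := this ⟨sub_nonneg.2 hθ.2, sub_le_self π hθ.1⟩ (by linarith)
      _ = sin θ := sin_pi_sub θ
  · calc 2 * θ * (π - θ) / π ^ 2 ≤ 2 / π * θ := by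
          rw [div_le_iff₀ (by positivity)]
          field_simp
          exact mul_le_mul_of_nonneg_left (sub_le_self π hθ.1) hθ.1
      _ ≤ sin θ := mul_le_sin hθ.1 h

theorem principalEigenfunction_div_le {a x z : ℝ} (hx : x ∈ Ioo 0 a) (hz : z ∈ Icc 0 a) :
    principalEigenfunction a z / principalEigenfunction a x ≤
      π * (z * (a - z)) / (x * (a - x)) := by
  have hx₀ := hx.1
  have hxa := sub_pos.2 hx.2
  have ha : 0 < a := hx₀.trans hx.2
  have hz₀ := pi_mul_div_mem_Icc hz
  have hlower := two_mul_mul_pi_sub_div_pi_sq_le_sin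
    (pi_mul_div_mem_Icc (Ioo_subset_Icc_self hx))
  have hupper := sin_le_two_mul_mul_pi_sub_div_pi hz₀
  have hsub (u : ℝ) : π - π * u / a = π * (a - u) / a := by field_simp
  rw [hsub] at hlower hupper
  have hz₁ := mul_nonneg (mul_nonneg zero_le_two hz₀.1)
    (pi_mul_div_mem_Icc (x := a - z) ⟨sub_nonneg.2 hz.2, sub_le_self a hz.1⟩).1
  calc principalEigenfunction a z / principalEigenfunction a x
      ≤ (2 * (π * z / a) * (π * (a - z) / a) / π) /
          (2 * (π * x / a) * (π * (a - x) / a) / π ^ 2) :=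
        div_le_div₀ (div_nonneg hz₁ pi_pos.le) hupper (by positivity) hlower
    _ = π * (z * (a - z)) / (x * (a - x)) := by field_simp

theorem greenKernel_mul_principalEigenfunction_div_le {a x z : ℝ} (hx : x ∈ Ioo 0 a)
    (hz : z ∈ Icc 0 a) :
    greenKernel a x z * (principalEigenfunction a z / principalEigenfunction a x) ≤
      2 * π * (z * min 1 (z / x)) := by
  obtain ⟨hx₀, hxa⟩ := hx
  obtain ⟨hz₀, hza⟩ := hz
  have ha : 0 < a := hx₀.trans hxa
  have hxa' : 0 < a - x := sub_pos.2 hxa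
  have : 0 ≤ a - z := sub_nonneg.2 hza
  have hratio := principalEigenfunction_div_le ⟨hx₀, hxa⟩ ⟨hz₀, hza⟩
  have hfrac : (a - z) / a ≤ 1 := (div_le_one ha).2 (by linarith)
  unfold greenKernel
  rcases le_total z x with h | h
  · rw [min_eq_right h, max_eq_left h, min_eq_right ((div_le_one hx₀).2 h)]
    calc 2 / a * (z * (a - x)) * (principalEigenfunction a z / principalEigenfunction a x)
        ≤ 2 / a * (z * (a - x)) * (π * (z * (a - z)) / (x * (a - x))) := by gcongr
      _ = 2 * π * (z * (z / x)) * ((a - z) / a) := by field_simp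
      _ ≤ 2 * π * (z * (z / x)) := mul_le_of_le_one_right (by positivity) hfrac
  · have hfrac' : (a - z) / (a - x) ≤ 1 := (div_le_one hxa').2 (by linarith)
    rw [min_eq_left h, max_eq_right h, min_eq_left ((one_le_div hx₀).2 h), mul_one]
    calc 2 / a * (x * (a - z)) * (principalEigenfunction a z / principalEigenfunction a x)
        ≤ 2 / a * (x * (a - z)) * (π * (z * (a - z)) / (x * (a - x))) := by gcongr
      _ = 2 * π * z * ((a - z) / a * ((a - z) / (a - x))) := by field_simp
      _ ≤ 2 * π * z :=
        mul_le_of_le_one_right (by positivity) (mul_le_one₀ hfrac (by positivity) hfrac')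

theorem mul_min_one_div_le {x z : ℝ} (hx : 0 < x) (hz : 0 ≤ z) :
    z * min 1 (z / x) ≤ min 1 (1 / x) * (z + z ^ 2) := by
  rcases le_total x 1 with h | h
  · rw [min_eq_left ((one_le_div hx).2 h)]
    nlinarith [min_le_left 1 (z / x)]
  · rw [min_eq_right ((div_le_one hx).2 h)]
    calc z * min 1 (z / x) ≤ z * (z / x) := by gcongr; exact min_le_right _ _
      _ = 1 / x * z ^ 2 := by ring
      _ ≤ 1 / x * (z + z ^ 2) := by gcongr; linarith

theorem principalEigenfunction_sq_le {a z : ℝ} (hz : z ∈ Icc 0 a) :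
    principalEigenfunction a z ^ 2 ≤ 10 * (z / a) ^ 2 :=
  calc principalEigenfunction a z ^ 2 ≤ (π * z / a) ^ 2 := by
        gcongr
        · exact principalEigenfunction_nonneg hz
        · exact sin_le (pi_mul_div_mem_Icc hz).1
    _ = π ^ 2 * (z / a) ^ 2 := by ring
    _ ≤ 10 * (z / a) ^ 2 := by
        gcongr
        nlinarith [pi_lt_d2, pi_pos]

theorem exp_pi_sq_div_four_le : exp (π ^ 2 / 4) ≤ 27 :=
  calc exp (π ^ 2 / 4) ≤ exp ((3 : ℕ) * 1) := by
        gcongr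
        push_cast
        nlinarith [pi_lt_d2, pi_pos]
    _ = exp 1 ^ 3 := exp_nat_mul 1 3
    _ ≤ 3 ^ 3 := by gcongr; exact exp_one_lt_three.le
    _ = 27 := by norm_num

theorem exp_mul_pker_le {a s x z : ℝ} (ha : 0 < a) (hs : 0 < s) (hx : x ∈ Icc 0 a)
    (hz : z ∈ Icc 0 a) :
    exp (principalEigenvalue a * s) * pker a s x z ≤
      27 * pker a s x z + 3 / a * (principalEigenfunction a x * principalEigenfunction a z) := by
  have hp := pker_nonneg ha hs hx hz
  have hux := principalEigenfunction_nonneg hx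
  have huz := principalEigenfunction_nonneg hz
  rcases le_total s (a ^ 2 / 2) with h | h
  · have hexp : exp (principalEigenvalue a * s) ≤ 27 :=
      (exp_le_exp.2 ((mul_le_mul_of_nonneg_left h (principalEigenvalue_pos ha).le).trans_eq
        (principalEigenvalue_mul_sq_div_two ha))).trans exp_pi_sq_div_four_le
    exact (mul_le_mul_of_nonneg_right hexp hp).trans (le_add_of_nonneg_right (by positivity))
  · calc exp (principalEigenvalue a * s) * pker a s x z
        ≤ exp (principalEigenvalue a * s) * (3 / a * (exp (-(principalEigenvalue a * s)) *
            principalEigenfunction a x * principalEigenfunction a z)) := by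
          gcongr
          exact pker_le ha h hx hz
      _ = 3 / a * (principalEigenfunction a x * principalEigenfunction a z) := by
          rw [exp_neg]
          field_simp
      _ ≤ _ := le_add_of_nonneg_left (by positivity)

theorem pker_sub_le {a s t x y z : ℝ} (hs : s ≤ t / 2) (ht : a ^ 2 ≤ t) (hx : x ∈ Ioo 0 a)
    (hy : y ∈ Icc 0 a) (hz : z ∈ Icc 0 a) :
    pker a (t - s) z y ≤ 3 * exp (principalEigenvalue a * s) *
      (principalEigenfunction a z / principalEigenfunction a x) * pker a t x y := by
  have ha : 0 < a := hx.1.trans hx.2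
  have hux := principalEigenfunction_pos hx
  have huz := principalEigenfunction_nonneg hz
  have hexp : exp (-(principalEigenvalue a * (t - s))) =
      exp (principalEigenvalue a * s) * exp (-(principalEigenvalue a * t)) := by
    rw [← exp_add]
    ring_nf
  calc pker a (t - s) z y
      ≤ 3 / a * (exp (-(principalEigenvalue a * (t - s))) * principalEigenfunction a z *
          principalEigenfunction a y) := pker_le ha (by linarith) hz hy
    _ = 3 * exp (principalEigenvalue a * s) *
          (principalEigenfunction a z / principalEigenfunction a x) *
          (1 / a * (exp (-(principalEigenvalue a * t)) * principalEigenfunction a x *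
            principalEigenfunction a y)) := by
        rw [hexp]
        field_simp
    _ ≤ 3 * exp (principalEigenvalue a * s) *
          (principalEigenfunction a z / principalEigenfunction a x) * pker a t x y := by
        gcongr
        exact le_pker ha (by nlinarith) (Ioo_subset_Icc_self hx) hy

theorem pker_mul_pker_sub_le {a s t x y z : ℝ} (hs : 0 < s) (hst : s ≤ t / 2) (ht : a ^ 2 ≤ t)
    (hx : x ∈ Ioo 0 a) (hy : y ∈ Icc 0 a) (hz : z ∈ Icc 0 a) :
    pker a s x z * pker a (t - s) z y ≤ pker a t x y *
      (81 * (principalEigenfunction a z / principalEigenfunction a x) * pker a s x z +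
        9 / a * principalEigenfunction a z ^ 2) := by
  have ha : 0 < a := hx.1.trans hx.2
  have hx' := Ioo_subset_Icc_self hx
  have hux := principalEigenfunction_pos hx
  have huz := principalEigenfunction_nonneg hz
  have hp := pker_nonneg ha hs hx' hz
  have hpt := pker_nonneg ha (by linarith) hx' hy (t := t)
  calc pker a s x z * pker a (t - s) z y
      ≤ pker a s x z * (3 * exp (principalEigenvalue a * s) *
          (principalEigenfunction a z / principalEigenfunction a x) * pker a t x y) := by
        gcongr
        exact pker_sub_le hst ht hx hy hz
    _ = pker a t x y * (3 * (principalEigenfunction a z / principalEigenfunction a x) *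
          (exp (principalEigenvalue a * s) * pker a s x z)) := by ring
    _ ≤ pker a t x y * (3 * (principalEigenfunction a z / principalEigenfunction a x) *
          (27 * pker a s x z +
            3 / a * (principalEigenfunction a x * principalEigenfunction a z))) := by
        gcongr
        exact exp_mul_pker_le ha hs hx' hz
    _ = pker a t x y *
          (81 * (principalEigenfunction a z / principalEigenfunction a x) * pker a s x z +
            9 / a * principalEigenfunction a z ^ 2) := by
        field_simp
        ring

/-- The occupation density at `z` of the bridge of length `t` from `x` to `y` that stays in
`(0, a)`, before normalisation by `pker a t x y`. It takes values in `ℝ≥0∞`, so no integrability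
is presupposed. -/
noncomputable def bridgeOccupation (a t x y z : ℝ) : ENNReal :=
  ∫⁻ s in Ioo 0 t, ENNReal.ofReal (pker a s x z * pker a (t - s) z y)

theorem setLIntegral_Ioo_comp_sub_left (f : ℝ → ENNReal) (t b c : ℝ) :
    ∫⁻ s in Ioo (t - c) (t - b), f (t - s) = ∫⁻ s in Ioo b c, f s := by
  rw [← preimage_const_sub_Ioo]
  exact (Measure.measurePreserving_sub_left volume t).setLIntegral_comp_preimage_emb
    (MeasurableEquiv.subLeft t).measurableEmbedding f _

theorem greenKernel_add_principalEigenfunction_sq_le {a t x z : ℝ} (ht : 0 ≤ t)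
    (hx : x ∈ Ioo 0 a) (hz : z ∈ Icc 0 a) :
    81 * (principalEigenfunction a z / principalEigenfunction a x) * greenKernel a x z +
        9 / a * principalEigenfunction a z ^ 2 * (t / 2) ≤
      600 * (t / a ^ 3 + min 1 (1 / x)) * (z + z ^ 2) := by
  have ha : 0 < a := hx.1.trans hx.2
  have hz₀ := hz.1
  have hmin : 0 ≤ min 1 (1 / x) := le_min zero_le_one (one_div_nonneg.2 hx.1.le)
  have hgreen : 81 * (principalEigenfunction a z / principalEigenfunction a x) *
      greenKernel a x z ≤ 600 * min 1 (1 / x) * (z + z ^ 2) :=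
    calc 81 * (principalEigenfunction a z / principalEigenfunction a x) * greenKernel a x z
        = 81 * (greenKernel a x z *
            (principalEigenfunction a z / principalEigenfunction a x)) := by ring
      _ ≤ 81 * (2 * π * (min 1 (1 / x) * (z + z ^ 2))) := by
          refine mul_le_mul_of_nonneg_left ?_ (by norm_num)
          exact (greenKernel_mul_principalEigenfunction_div_le hx hz).trans
            (mul_le_mul_of_nonneg_left (mul_min_one_div_le hx.1 hz₀) two_pi_pos.le)
      _ = 162 * π * (min 1 (1 / x) * (z + z ^ 2)) := by ring
      _ ≤ 600 * (min 1 (1 / x) * (z + z ^ 2)) := by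
          gcongr
          linarith [pi_lt_d2]
      _ = 600 * min 1 (1 / x) * (z + z ^ 2) := by ring
  have hmode : 9 / a * principalEigenfunction a z ^ 2 * (t / 2) ≤
      600 * (t / a ^ 3) * (z + z ^ 2) :=
    calc 9 / a * principalEigenfunction a z ^ 2 * (t / 2)
        ≤ 9 / a * (10 * (z / a) ^ 2) * (t / 2) := by
          gcongr
          exact principalEigenfunction_sq_le hz
      _ = 45 * (t / a ^ 3) * z ^ 2 := by
          field_simp
          ring
      _ ≤ 600 * (t / a ^ 3) * (z + z ^ 2) := by
          gcongr
          · norm_num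
          · linarith
  linarith

theorem ofReal_pker_mul_pker_sub_le {a s t x y z : ℝ} (hs : 0 < s) (hst : s ≤ t / 2)
    (ht : a ^ 2 ≤ t) (hx : x ∈ Ioo 0 a) (hy : y ∈ Icc 0 a) (hz : z ∈ Icc 0 a) :
    ENNReal.ofReal (pker a s x z * pker a (t - s) z y) ≤
      ENNReal.ofReal
          (pker a t x y * (81 * (principalEigenfunction a z / principalEigenfunction a x))) *
        ENNReal.ofReal (pker a s x z) +
      ENNReal.ofReal (pker a t x y * (9 / a * principalEigenfunction a z ^ 2)) := by
  have ha : 0 < a := hx.1.trans hx.2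
  have hux := principalEigenfunction_pos hx
  have huz := principalEigenfunction_nonneg hz
  have hpt := pker_nonneg ha (by linarith) (Ioo_subset_Icc_self hx) hy (t := t)
  rw [← ENNReal.ofReal_mul (by positivity)]
  refine (ENNReal.ofReal_le_ofReal ?_).trans ENNReal.ofReal_add_le
  rw [mul_assoc, ← mul_add]
  exact pker_mul_pker_sub_le hs hst ht hx hy hz

theorem lintegral_pker_mul_pker_first_half_le {a t x y z : ℝ} (ht : a ^ 2 ≤ t) (hx : x ∈ Ioo 0 a)
    (hy : y ∈ Icc 0 a) (hz : z ∈ Ioo 0 a) :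
    ∫⁻ s in Ioc 0 (t / 2), ENNReal.ofReal (pker a s x z * pker a (t - s) z y) ≤
      ENNReal.ofReal (600 * (t / a ^ 3 + min 1 (1 / x)) * (z + z ^ 2) * pker a t x y) := by
  have ha : 0 < a := hx.1.trans hx.2
  have ht₀ : 0 < t := (by positivity : 0 < a ^ 2).trans_le ht
  have hz' := Ioo_subset_Icc_self hz
  have hux := principalEigenfunction_pos hx
  have huz := principalEigenfunction_nonneg hz'
  have hpt := pker_nonneg ha ht₀ (Ioo_subset_Icc_self hx) hy
  have hgreen := (greenKernel_pos hx hz).le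
  calc ∫⁻ s in Ioc 0 (t / 2), ENNReal.ofReal (pker a s x z * pker a (t - s) z y)
      ≤ ∫⁻ s in Ioc 0 (t / 2), (ENNReal.ofReal
            (pker a t x y * (81 * (principalEigenfunction a z / principalEigenfunction a x))) *
          ENNReal.ofReal (pker a s x z) +
          ENNReal.ofReal (pker a t x y * (9 / a * principalEigenfunction a z ^ 2))) :=
        setLIntegral_mono' measurableSet_Ioc fun s hs =>
          ofReal_pker_mul_pker_sub_le hs.1 hs.2 ht hx hy hz'
    _ = ENNReal.ofReal
            (pker a t x y * (81 * (principalEigenfunction a z / principalEigenfunction a x))) *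
          (∫⁻ s in Ioc 0 (t / 2), ENNReal.ofReal (pker a s x z)) +
          ENNReal.ofReal (pker a t x y * (9 / a * principalEigenfunction a z ^ 2)) *
            ENNReal.ofReal (t / 2) := by
        rw [lintegral_add_right _ measurable_const, setLIntegral_const, Real.volume_Ioc, sub_zero,
          lintegral_const_mul' _ _ ENNReal.ofReal_ne_top]
    _ ≤ ENNReal.ofReal
            (pker a t x y * (81 * (principalEigenfunction a z / principalEigenfunction a x))) *
          ENNReal.ofReal (greenKernel a x z) +
          ENNReal.ofReal (pker a t x y * (9 / a * principalEigenfunction a z ^ 2)) *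
            ENNReal.ofReal (t / 2) := by
        rw [← lintegral_pker_Ioi hx hz]
        gcongr
        exact Ioc_subset_Ioi_self
    _ = ENNReal.ofReal ((81 * (principalEigenfunction a z / principalEigenfunction a x) *
          greenKernel a x z + 9 / a * principalEigenfunction a z ^ 2 * (t / 2)) *
            pker a t x y) := by
        rw [← ENNReal.ofReal_mul (by positivity), ← ENNReal.ofReal_mul (by positivity),
          ← ENNReal.ofReal_add (by positivity) (by positivity)]
        ring_nf
    _ ≤ _ := by
        gcongr
        exact greenKernel_add_principalEigenfunction_sq_le ht₀.le hx hz'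

-- The second half of the time interval is the first half of the reversed bridge.
theorem bridgeOccupation_le {a t x y z : ℝ} (ht : a ^ 2 ≤ t) (hx : x ∈ Ioo 0 a) (hy : y ∈ Ioo 0 a)
    (hz : z ∈ Ioo 0 a) :
    bridgeOccupation a t x y z ≤ ENNReal.ofReal
      (1200 * (t / a ^ 3 + min 1 (1 / x) + min 1 (1 / y)) * (z + z ^ 2) * pker a t x y) := by
  have ha : 0 < a := hx.1.trans hx.2
  have ht₀ : 0 < t := (by positivity : 0 < a ^ 2).trans_le ht
  have hx₀ := hx.1
  have hy₀ := hy.1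
  have hz₀ := hz.1
  have hpt := pker_nonneg ha ht₀ (Ioo_subset_Icc_self hx) (Ioo_subset_Icc_self hy)
  have hfirst := lintegral_pker_mul_pker_first_half_le ht hx (Ioo_subset_Icc_self hy) hz
  have hsecond : ∫⁻ s in Ioo (t / 2) t, ENNReal.ofReal (pker a s x z * pker a (t - s) z y) ≤
      ENNReal.ofReal (600 * (t / a ^ 3 + min 1 (1 / y)) * (z + z ^ 2) * pker a t x y) := by
    have hreverse (s : ℝ) : pker a (t - s) x z * pker a (t - (t - s)) z y =
        pker a s y z * pker a (t - s) z x := by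
      rw [sub_sub_cancel, pker_comm a s, pker_comm a (t - s), mul_comm]
    rw [← setLIntegral_Ioo_comp_sub_left _ t, sub_self, sub_half, pker_comm a t]
    simp only [hreverse]
    exact (lintegral_mono_set Ioo_subset_Ioc_self).trans
      (lintegral_pker_mul_pker_first_half_le ht hy (Ioo_subset_Icc_self hx) hz)
  rw [bridgeOccupation, ← Ioc_union_Ioo_eq_Ioo (half_pos ht₀).le (half_lt_self ht₀)]
  refine (lintegral_union_le _ _ _).trans ((add_le_add hfirst hsecond).trans ?_)
  rw [← ENNReal.ofReal_add (by positivity) (by positivity), ← add_mul, ← add_mul]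
  gcongr
  have : 0 ≤ min 1 (1 / x) := by positivity
  have : 0 ≤ min 1 (1 / y) := by positivity
  linarith

theorem enorm_integral_integral_pker_le {a t x y : ℝ} {w : ℝ → ℝ} (ha : 0 < a) (ht : 0 ≤ t)
    (hx : x ∈ Icc 0 a) (hy : y ∈ Icc 0 a) (hw : AEMeasurable w (volume.restrict (Ioo 0 a))) :
    ‖∫ s in 0..t, ∫ z in 0..a, pker a s x z * w z * pker a (t - s) z y‖ₑ ≤
      ∫⁻ z in Ioo 0 a, ‖w z‖ₑ * bridgeOccupation a t x y z := by
  have hfactor : ∀ s ∈ Ioo 0 t, ∀ z ∈ Ioo 0 a, ‖pker a s x z * w z * pker a (t - s) z y‖ₑ =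
      ‖w z‖ₑ * ENNReal.ofReal (pker a s x z * pker a (t - s) z y) := fun s hs z hz => by
    have hz' := Ioo_subset_Icc_self hz
    rw [mul_right_comm, enorm_mul, mul_comm, Real.enorm_of_nonneg (mul_nonneg
      (pker_nonneg ha hs.1 hx hz') (pker_nonneg ha (sub_pos.2 hs.2) hz' hy))]
  have hmeas : Measurable fun p : ℝ × ℝ =>
      ENNReal.ofReal (pker a p.1 x p.2 * pker a (t - p.1) p.2 y) :=
    (((measurable_pker a).comp (by fun_prop : Measurable fun p : ℝ × ℝ => (p.1, x, p.2))).mul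
      ((measurable_pker a).comp
        (by fun_prop : Measurable fun p : ℝ × ℝ => (t - p.1, p.2, y)))).ennreal_ofReal
  rw [intervalIntegral.integral_of_le ht, integral_Ioc_eq_integral_Ioo]
  simp only [intervalIntegral.integral_of_le ha.le, integral_Ioc_eq_integral_Ioo]
  calc ‖∫ s in Ioo 0 t, ∫ z in Ioo 0 a, pker a s x z * w z * pker a (t - s) z y‖ₑ
      ≤ ∫⁻ s in Ioo 0 t, ∫⁻ z in Ioo 0 a, ‖pker a s x z * w z * pker a (t - s) z y‖ₑ :=
        (enorm_integral_le_lintegral_enorm _).trans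
          (lintegral_mono fun s => enorm_integral_le_lintegral_enorm _)
    _ = ∫⁻ s in Ioo 0 t, ∫⁻ z in Ioo 0 a,
          ‖w z‖ₑ * ENNReal.ofReal (pker a s x z * pker a (t - s) z y) :=
        setLIntegral_congr_fun measurableSet_Ioo fun s hs =>
          setLIntegral_congr_fun measurableSet_Ioo (hfactor s hs)
    _ = ∫⁻ z in Ioo 0 a, ∫⁻ s in Ioo 0 t,
          ‖w z‖ₑ * ENNReal.ofReal (pker a s x z * pker a (t - s) z y) :=
        lintegral_lintegral_swap (hw.enorm.comp_snd.mul hmeas.aemeasurable)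
    _ = ∫⁻ z in Ioo 0 a, ‖w z‖ₑ * bridgeOccupation a t x y z := by
        simp only [lintegral_const_mul' _ _ enorm_ne_top, bridgeOccupation]

theorem aemeasurable_of_integrableOn_add_sq_mul {w : ℝ → ℝ}
    (hw : IntegrableOn (fun z => (z + z ^ 2) * w z) (Ioi 0)) :
    AEMeasurable w (volume.restrict (Ioi 0)) := by
  have hfactor : Measurable fun z : ℝ => z + z ^ 2 := by fun_prop
  refine (hw.aemeasurable.div hfactor.aemeasurable).congr ?_
  filter_upwards [ae_restrict_mem measurableSet_Ioi] with z hz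
  have hz' : z + z ^ 2 ≠ 0 := (add_pos hz (pow_pos hz 2)).ne'
  exact mul_div_cancel_left₀ (w z) hz'

theorem lintegral_enorm_mul_bridgeOccupation_le {a t x y : ℝ} {w : ℝ → ℝ} (ht : a ^ 2 ≤ t)
    (hx : x ∈ Ioo 0 a) (hy : y ∈ Ioo 0 a)
    (hw : IntegrableOn (fun z => (z + z ^ 2) * w z) (Ioi 0)) :
    ∫⁻ z in Ioo 0 a, ‖w z‖ₑ * bridgeOccupation a t x y z ≤ ENNReal.ofReal
      (1200 * (∫ z in Ioi 0, ‖(z + z ^ 2) * w z‖) *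
        (t / a ^ 3 + min 1 (1 / x) + min 1 (1 / y)) * pker a t x y) := by
  have ha : 0 < a := hx.1.trans hx.2
  have ht₀ : 0 < t := (by positivity : 0 < a ^ 2).trans_le ht
  have hx₀ := hx.1
  have hy₀ := hy.1
  have hpt := pker_nonneg ha ht₀ (Ioo_subset_Icc_self hx) (Ioo_subset_Icc_self hy)
  set K := 1200 * (t / a ^ 3 + min 1 (1 / x) + min 1 (1 / y)) * pker a t x y with hK
  have hK₀ : 0 ≤ K := by positivity
  have hbound : ∀ z ∈ Ioo 0 a, ‖w z‖ₑ * bridgeOccupation a t x y z ≤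
      ENNReal.ofReal K * ‖(z + z ^ 2) * w z‖ₑ := fun z hz => by
    have hz₀ : 0 ≤ z + z ^ 2 := add_nonneg hz.1.le (sq_nonneg z)
    calc ‖w z‖ₑ * bridgeOccupation a t x y z ≤ ‖w z‖ₑ * ENNReal.ofReal (K * (z + z ^ 2)) := by
          gcongr
          exact (bridgeOccupation_le ht hx hy hz).trans_eq (by rw [hK, mul_right_comm])
      _ = ENNReal.ofReal K * ‖(z + z ^ 2) * w z‖ₑ := by
          rw [enorm_mul, Real.enorm_of_nonneg hz₀, ENNReal.ofReal_mul hK₀]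
          ring
  calc ∫⁻ z in Ioo 0 a, ‖w z‖ₑ * bridgeOccupation a t x y z
      ≤ ∫⁻ z in Ioo 0 a, ENNReal.ofReal K * ‖(z + z ^ 2) * w z‖ₑ :=
        setLIntegral_mono' measurableSet_Ioo hbound
    _ ≤ ∫⁻ z in Ioi 0, ENNReal.ofReal K * ‖(z + z ^ 2) * w z‖ₑ :=
        lintegral_mono_set Ioo_subset_Ioi_self
    _ = ENNReal.ofReal (K * ∫ z in Ioi 0, ‖(z + z ^ 2) * w z‖) := by
        rw [lintegral_const_mul' _ _ ENNReal.ofReal_ne_top,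
          ← ofReal_integral_norm_eq_lintegral_enorm hw, ENNReal.ofReal_mul hK₀]
    _ = _ := by rw [hK]; ring_nf

theorem integrableOn_add_sq_mul_exp_neg {c : ℝ} (hc : 0 < c) :
    IntegrableOn (fun z => (z + z ^ 2) * exp (-c * z)) (Ioi 0) := by
  have hpow {s : ℝ} (hs : 0 ≤ s) :=
    integrableOn_rpow_mul_exp_neg_mul_rpow (neg_one_lt_zero.trans_le hs) one_pos hc
  refine ((hpow zero_le_one).add (hpow zero_le_two)).congr (.of_forall fun z => ?_)
  simp [add_mul]

theorem stmt11_general (w : ℝ → ℝ) (hw : IntegrableOn (fun z => (z + z ^ 2) * w z) (Ioi 0)) :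
    ∃ C : ℝ, 0 < C ∧ ∀ a : ℝ, 0 < a → ∀ x ∈ Ioo 0 a, ∀ y ∈ Ioo 0 a, ∀ t : ℝ, a ^ 2 ≤ t →
      |∫ s in 0..t, ∫ z in 0..a, pker a s x z * w z * pker a (t - s) z y| ≤
        C * (t / a ^ 3 + min 1 (1 / x) + min 1 (1 / y)) * pker a t x y := by
  have : 0 ≤ ∫ z in Ioi 0, ‖(z + z ^ 2) * w z‖ := integral_nonneg fun z => norm_nonneg _
  refine ⟨1200 * (∫ z in Ioi 0, ‖(z + z ^ 2) * w z‖) + 1, by positivity,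
    fun a ha x hx y hy t ht => ?_⟩
  have ht₀ : 0 < t := (by positivity : 0 < a ^ 2).trans_le ht
  have hx₀ := hx.1
  have hy₀ := hy.1
  have hx' := Ioo_subset_Icc_self hx
  have hy' := Ioo_subset_Icc_self hy
  have hpt := pker_nonneg ha ht₀ hx' hy'
  have hwm : AEMeasurable w (volume.restrict (Ioo 0 a)) :=
    (aemeasurable_of_integrableOn_add_sq_mul hw).mono_set Ioo_subset_Ioi_self
  rw [← ENNReal.ofReal_le_ofReal_iff (by positivity), ← Real.enorm_eq_ofReal_abs]
  refine (enorm_integral_integral_pker_le ha ht₀.le hx' hy' hwm).trans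
    ((lintegral_enorm_mul_bridgeOccupation_le ht hx hy hw).trans ?_)
  gcongr
  exact le_add_of_nonneg_right zero_le_one

/-- Taboo-bridge estimate for `t ≥ a²`: the expectation of `∫_0^t e^{−cX_s} ds`
under the taboo bridge from `x` to `y` of length `t` is at most
`C·(t/a³ + min(1,1/x) + min(1,1/y))`. -/
theorem stmt11 (c : ℝ) (hc : 0 < c) :
    ∃ C : ℝ, 0 < C ∧ ∀ a : ℝ, 0 < a → ∀ x ∈ Set.Ioo (0:ℝ) a, ∀ y ∈ Set.Ioo (0:ℝ) a,
      ∀ t : ℝ, a^2 ≤ t →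
      (∫ s in (0:ℝ)..t, ∫ z in (0:ℝ)..a,
          pker a s x z * Real.exp (-c * z) * pker a (t - s) z y) ≤
        C * (t / a^3 + min 1 (1/x) + min 1 (1/y)) * pker a t x y := by
  obtain ⟨C, hC, h⟩ := stmt11_general _ (integrableOn_add_sq_mul_exp_neg hc)
  exact ⟨C, hC, fun a ha x hx y hy t ht => (le_abs_self _).trans (h a ha x hx y hy t ht)⟩
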